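/- Let r > 0, set V := ℍ ∩ B(0, r) where ℍ = {z ∈ ℂ : Im z > 0}, and let f be holomorphic on V with a continuous extension to V ∪ [0, r). Suppose there is an injective holomorphic function φ : B(0, 1) → ℂ with f([0, r)) ⊆ Γ := φ([0, 1)). Then there exists r' ∈ (0, r] such that f has a holomorphic extension F to B(0, r') \ ℝ_{≤0}, given by F(z) = f(z) for Im z ≥ 0 and F(z) = φ( conj( φ^{-1}( f( conj z ) ) ) ) for Im z < 0; in particular, for z ∈ B(0, r') with Im z < 0 the value f(conj z) lies in φ(B(0, 1)), so the formula is well defined. -/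

import Mathlib

open Metric Set

/-!
The inverse `ψ` of the injective holomorphic map `φ` is holomorphic on the image of `φ`, and it
straightens the arc: `ψ ∘ f` is real where `f` lies on the arc. Classical Schwarz reflection
extends `ψ ∘ f` across the real axis, and `φ` carries the extension back. Near `0` everything is
defined because `φ` is open, so continuity of `f` at `0` keeps `f` inside the image of `φ`.
Reflection itself rests on Morera's theorem: a rectangle meeting the real axis splits into two
rectangles, inside each of which the glued function is holomorphic.
-/

section InjectiveHolomorphic

open Filter Topology

lemma eventually_eq_of_eventually_deriv_eq_zero {𝕜 F : Type*} [RCLike 𝕜] [NormedAddCommGroup F]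
    [NormedSpace 𝕜 F] {f : 𝕜 → F} {a : 𝕜} (hf : ∀ᶠ z in 𝓝 a, DifferentiableAt 𝕜 f z)
    (hderiv : ∀ᶠ z in 𝓝 a, deriv f z = 0) : ∀ᶠ z in 𝓝 a, f z = f a := by
  obtain ⟨ε, hε, hball⟩ := eventually_nhds_iff_ball.1 (hf.and hderiv)
  let _ := NormedSpace.restrictScalars ℝ 𝕜 𝕜
  filter_upwards [ball_mem_nhds a hε] with z hz
  exact isOpen_ball.is_const_of_deriv_eq_zero (convex_ball a ε).isPreconnected
    (fun y hy => (hball y hy).1.differentiableWithinAt) (fun y hy => (hball y hy).2) hz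
    (mem_ball_self hε)

lemma not_eventually_eq_of_injOn {X Y : Type*} [TopologicalSpace X] {f : X → Y} {s : Set X} {a : X}
    [(𝓝[≠] a).NeBot] (hs : s ∈ 𝓝 a) (hinj : InjOn f s) : ¬ ∀ᶠ z in 𝓝 a, f z = f a := by
  intro hconst
  have heq : ∀ᶠ z in 𝓝 a, z = a := by
    filter_upwards [hconst, hs] with z hz hzs using hinj hzs (mem_of_mem_nhds hs) hz
  have hne : ∀ᶠ z in 𝓝[≠] a, z ≠ a := self_mem_nhdsWithin
  obtain ⟨z, hz, hza⟩ := ((heq.filter_mono nhdsWithin_le_nhds).and hne).exists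
  exact hza hz

lemma nhds_le_map_nhds_of_injOn {E : Type*} [NormedAddCommGroup E] [NormedSpace ℂ E] [Nontrivial E]
    {f : E → ℂ} {s : Set E} {a : E} (hf : AnalyticAt ℂ f a) (hs : s ∈ 𝓝 a) (hinj : InjOn f s) :
    𝓝 (f a) ≤ map f (𝓝 a) :=
  haveI := Module.punctured_nhds_neBot ℂ E a
  hf.eventually_constant_or_nhds_le_map_nhds.resolve_left (not_eventually_eq_of_injOn hs hinj)

lemma eventually_deriv_ne_zero_of_injOn {f : ℂ → ℂ} {s : Set ℂ} {a : ℂ} (hf : AnalyticAt ℂ f a)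
    (hs : s ∈ 𝓝 a) (hinj : InjOn f s) : ∀ᶠ z in 𝓝[≠] a, deriv f z ≠ 0 :=
  hf.deriv.eventually_eq_zero_or_eventually_ne_zero.resolve_left fun hderiv =>
    not_eventually_eq_of_injOn hs hinj <| eventually_eq_of_eventually_deriv_eq_zero
      (hf.eventually_analyticAt.mono fun _ hz => hz.differentiableAt) hderiv

lemma continuousAt_of_leftInvOn_of_nhds_le_map {X Y : Type*} [TopologicalSpace X]
    [TopologicalSpace Y] {f : X → Y} {g : Y → X} {s : Set X} {a : X} (hs : s ∈ 𝓝 a)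
    (hg : LeftInvOn g f s) (hopen : 𝓝 (f a) ≤ map f (𝓝 a)) : ContinuousAt g (f a) := by
  have hid : Tendsto (g ∘ f) (𝓝 a) (𝓝 a) :=
    tendsto_id.congr' (by filter_upwards [hs] with z hz using (hg hz).symm)
  rw [ContinuousAt, hg (mem_of_mem_nhds hs)]
  exact (tendsto_map'_iff.2 hid).mono_left hopen

variable {φ ψ : ℂ → ℂ} {U : Set ℂ}

lemma isOpen_image_of_differentiableOn_of_injOn (hU : IsOpen U) (hφ : DifferentiableOn ℂ φ U)
    (hinj : InjOn φ U) : IsOpen (φ '' U) := by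
  refine isOpen_iff_mem_nhds.2 (forall_mem_image.2 fun w hw => ?_)
  have hUw := hU.mem_nhds hw
  exact nhds_le_map_nhds_of_injOn (hφ.analyticAt hUw) hUw hinj (image_mem_map hUw)

lemma differentiableOn_image_of_leftInvOn (hU : IsOpen U) (hφ : DifferentiableOn ℂ φ U)
    (hψ : LeftInvOn ψ φ U) : DifferentiableOn ℂ ψ (φ '' U) := by
  have hopen := isOpen_image_of_differentiableOn_of_injOn hU hφ hψ.injOn
  have hright : RightInvOn ψ φ (φ '' U) := hψ.rightInvOn_image
  have hcont : ∀ w ∈ U, ContinuousAt ψ (φ w) := fun w hw =>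
    have hUw := hU.mem_nhds hw
    continuousAt_of_leftInvOn_of_nhds_le_map hUw hψ
      (nhds_le_map_nhds_of_injOn (hφ.analyticAt hUw) hUw hψ.injOn)
  have hdiff : ∀ w ∈ U, deriv φ w ≠ 0 → DifferentiableAt ℂ ψ (φ w) := fun w hw hne =>
    (HasDerivAt.of_local_left_inverse (hcont w hw)
      (by rw [hψ hw]; exact (hφ.differentiableAt (hU.mem_nhds hw)).hasDerivAt) hne
      (eventually_of_mem (hopen.mem_nhds (mem_image_of_mem φ hw)) hright)).differentiableAt
  rintro _ ⟨w, hw, rfl⟩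
  -- Zeros of `deriv φ` are isolated, and `ψ` is continuous there: the singularity is removable.
  refine (Complex.analyticAt_of_differentiable_on_punctured_nhds_of_continuousAt ?_
    (hcont w hw)).differentiableAt.differentiableWithinAt
  have hψw : Tendsto ψ (𝓝 (φ w)) (𝓝 w) := by simpa only [ContinuousAt, hψ hw] using hcont w hw
  have hderiv := eventually_nhdsWithin_iff.1 <| eventually_deriv_ne_zero_of_injOn
    (hφ.analyticAt (hU.mem_nhds hw)) (hU.mem_nhds hw) hψ.injOn
  rw [eventually_nhdsWithin_iff]
  filter_upwards [hψw.eventually hderiv, hopen.mem_nhds (mem_image_of_mem φ hw)]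
  rintro _ hne ⟨v, hv, rfl⟩ hvw
  rw [hψ hv] at hne
  exact hdiff v hv (hne fun h => hvw (congrArg φ h))

end InjectiveHolomorphic

section Morera

open Complex MeasureTheory
open scoped Interval

variable {E : Type*} [NormedAddCommGroup E] {f : ℂ → E}

lemma intervalIntegrable_vertical_of_continuousOn {x₁ x₂ y₁ y₂ x a b : ℝ}
    (hf : ContinuousOn f ([[x₁, x₂]] ×ℂ [[y₁, y₂]])) (hx : x ∈ [[x₁, x₂]])
    (hab : [[a, b]] ⊆ [[y₁, y₂]]) :
    IntervalIntegrable (fun y : ℝ => f (x + y * I)) volume a b :=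
  (hf.comp (by fun_prop) fun y hy => by simpa [mem_reProdIm, hx] using hab hy).intervalIntegrable

variable [NormedSpace ℂ E]

/-- The integral of `f` along the boundary of the rectangle with vertical sides on `re = x₁`,
`re = x₂` and horizontal sides on `im = y₁`, `im = y₂`, counterclockwise for `x₁ ≤ x₂` and
`y₁ ≤ y₂`. -/
noncomputable def rectBoundaryIntegral (f : ℂ → E) (x₁ x₂ y₁ y₂ : ℝ) : E :=
  (∫ x in x₁..x₂, f (x + y₁ * I)) - (∫ x in x₁..x₂, f (x + y₂ * I)) +
    I • (∫ y in y₁..y₂, f (x₂ + y * I)) - I • (∫ y in y₁..y₂, f (x₁ + y * I))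

lemma rectBoundaryIntegral_add_adjacent {x₁ x₂ y₁ y₂ y₃ : ℝ}
    (hf : ∀ x ∈ ({x₁, x₂} : Set ℝ), ∀ y ∈ ({y₁, y₃} : Set ℝ),
      IntervalIntegrable (fun t : ℝ => f (x + t * I)) volume y y₂) :
    rectBoundaryIntegral f x₁ x₂ y₁ y₂ + rectBoundaryIntegral f x₁ x₂ y₂ y₃ =
      rectBoundaryIntegral f x₁ x₂ y₁ y₃ := by
  have hsplit : ∀ x ∈ ({x₁, x₂} : Set ℝ), (∫ y in y₁..y₃, f (x + y * I)) =
      (∫ y in y₁..y₂, f (x + y * I)) + ∫ y in y₂..y₃, f (x + y * I) := fun x hx =>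
    (intervalIntegral.integral_add_adjacent_intervals (hf x hx y₁ (by simp))
      (hf x hx y₃ (by simp)).symm).symm
  simp only [rectBoundaryIntegral, hsplit x₁ (by simp), hsplit x₂ (by simp), smul_add]
  abel

lemma rectBoundaryIntegral_eq_zero_of_differentiableAt_off_line {x₁ x₂ y₁ y₂ c : ℝ}
    (hc : ContinuousOn f ([[x₁, x₂]] ×ℂ [[y₁, y₂]]))
    (hd : ∀ z ∈ [[x₁, x₂]] ×ℂ [[y₁, y₂]], z.im ≠ c → DifferentiableAt ℂ f z) :
    rectBoundaryIntegral f x₁ x₂ y₁ y₂ = 0 := by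
  have hoff : ∀ a b : ℝ, [[a, b]] ⊆ [[y₁, y₂]] → c ∉ Ioo (min a b) (max a b) →
      rectBoundaryIntegral f x₁ x₂ a b = 0 := by
    intro a b hab hcab
    refine integral_boundary_rect_eq_zero_of_continuousOn_of_differentiableOn f ⟨x₁, a⟩ ⟨x₂, b⟩
      (hc.mono (inter_subset_inter_right _ (preimage_mono hab))) fun z hz => ?_
    have hne : z.im ≠ c := by
      rintro rfl
      exact hcab hz.2
    exact (hd z ⟨Ioo_subset_Icc_self hz.1, hab (Ioo_subset_Icc_self hz.2)⟩
      hne).differentiableWithinAt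
  by_cases hmem : c ∈ [[y₁, y₂]]
  · have hlow : [[y₁, c]] ⊆ [[y₁, y₂]] := uIcc_subset_uIcc left_mem_uIcc hmem
    have hhigh : [[c, y₂]] ⊆ [[y₁, y₂]] := uIcc_subset_uIcc hmem right_mem_uIcc
    rw [← rectBoundaryIntegral_add_adjacent (y₂ := c), hoff y₁ c hlow (by simpa using le_of_lt),
      hoff c y₂ hhigh (by simpa using le_of_lt), add_zero]
    rintro x (rfl | rfl) y (rfl | rfl)
    · exact intervalIntegrable_vertical_of_continuousOn hc left_mem_uIcc hlow
    · exact (intervalIntegrable_vertical_of_continuousOn hc left_mem_uIcc hhigh).symm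
    · exact intervalIntegrable_vertical_of_continuousOn hc right_mem_uIcc hlow
    · exact (intervalIntegrable_vertical_of_continuousOn hc right_mem_uIcc hhigh).symm
  · exact hoff y₁ y₂ subset_rfl fun h => hmem (Ioo_subset_Icc_self h)

theorem differentiableOn_of_sdiff_horizontal_line [CompleteSpace E] {D : Set ℂ} {c : ℝ}
    (hD : IsOpen D) (hc : ContinuousOn f D) (hd : DifferentiableOn ℂ f (D \ {z | z.im = c})) :
    DifferentiableOn ℂ f D := by
  have hopen : IsOpen (D \ {z | z.im = c}) :=
    hD.sdiff (isClosed_eq continuous_im continuous_const)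
  refine (isConservativeOn_and_continuousOn_iff_isDifferentiableOn hD).1 ⟨fun z w hzw => ?_, hc⟩
  rw [← add_eq_zero_iff_eq_neg, wedgeIntegral_add_wedgeIntegral_eq]
  exact rectBoundaryIntegral_eq_zero_of_differentiableAt_off_line (hc.mono hzw) fun u hu hne =>
    hd.differentiableAt (hopen.mem_nhds ⟨hzw hu, hne⟩)

end Morera

section Reflection

open Complex
open scoped ComplexConjugate Topology

variable {g : ℂ → ℂ} {D : Set ℂ} {z : ℂ}

/-- The Schwarz reflection of `g` in the real axis: `g` itself on the closed upper half-plane and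
`z ↦ conj (g (conj z))` on the open lower half-plane. -/
noncomputable def schwarzReflection (g : ℂ → ℂ) (z : ℂ) : ℂ :=
  if 0 ≤ z.im then g z else conj (g (conj z))

lemma schwarzReflection_of_im_nonneg (hz : 0 ≤ z.im) : schwarzReflection g z = g z :=
  if_pos hz

lemma schwarzReflection_of_im_neg (hz : z.im < 0) :
    schwarzReflection g z = conj (g (conj z)) :=
  if_neg hz.not_ge

lemma continuousOn_schwarzReflection (hD : MapsTo conj D D)
    (hg : ContinuousOn g (D ∩ {z | 0 ≤ z.im})) (hreal : ∀ z ∈ D, z.im = 0 → (g z).im = 0) :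
    ContinuousOn (schwarzReflection g) D := by
  refine ContinuousOn.if ?_ ?_ ?_
  · rintro z ⟨hz, hfrontier⟩
    have him : z.im = 0 := by simpa using hfrontier
    rw [conj_eq_iff_im.2 him, conj_eq_iff_im.2 (hreal z hz him)]
  · rwa [(isClosed_le continuous_const continuous_im).closure_eq]
  · refine continuous_conj.comp_continuousOn (hg.comp continuous_conj.continuousOn ?_)
    rintro z ⟨hz, hclosure⟩
    exact ⟨hD hz, by simpa using hclosure⟩

lemma differentiableOn_schwarzReflection_sdiff_real (hopen : IsOpen D) (hD : MapsTo conj D D)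
    (hg : DifferentiableOn ℂ g (D ∩ {z | 0 < z.im})) :
    DifferentiableOn ℂ (schwarzReflection g) (D \ {z | z.im = 0}) := by
  have hupper : ∀ z ∈ D, 0 < z.im → DifferentiableAt ℂ g z := fun z hz him =>
    hg.differentiableAt <|
      (hopen.inter (isOpen_lt continuous_const continuous_im)).mem_nhds ⟨hz, him⟩
  rintro z ⟨hz, him⟩
  refine DifferentiableAt.differentiableWithinAt ?_
  rcases lt_or_gt_of_ne him with hneg | hpos
  · have hconj : DifferentiableAt ℂ (conj ∘ g ∘ conj) z :=
      differentiableAt_conj_conj_iff.2 (hupper _ (hD hz) (by simpa using hneg))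
    refine hconj.congr_of_eventuallyEq ?_
    filter_upwards [(isOpen_lt continuous_im continuous_const).mem_nhds hneg] with u hu
    exact schwarzReflection_of_im_neg hu
  · refine (hupper z hz hpos).congr_of_eventuallyEq ?_
    filter_upwards [(isOpen_lt continuous_const continuous_im).mem_nhds hpos] with u hu
    exact schwarzReflection_of_im_nonneg (le_of_lt hu)

theorem differentiableOn_schwarzReflection (hopen : IsOpen D) (hD : MapsTo conj D D)
    (hgc : ContinuousOn g (D ∩ {z | 0 ≤ z.im})) (hgd : DifferentiableOn ℂ g (D ∩ {z | 0 < z.im}))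
    (hreal : ∀ z ∈ D, z.im = 0 → (g z).im = 0) : DifferentiableOn ℂ (schwarzReflection g) D :=
  differentiableOn_of_sdiff_horizontal_line hopen
    (continuousOn_schwarzReflection hD hgc hreal)
    (differentiableOn_schwarzReflection_sdiff_real hopen hD hgd)

lemma mapsTo_schwarzReflection {U : Set ℂ} (hD : MapsTo conj D D) (hU : MapsTo conj U U)
    (hg : MapsTo g (D ∩ {z | 0 ≤ z.im}) U) : MapsTo (schwarzReflection g) D U := by
  intro z hz
  rcases le_or_gt 0 z.im with hnonneg | hneg
  · rw [schwarzReflection_of_im_nonneg hnonneg]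
    exact hg ⟨hz, hnonneg⟩
  · rw [schwarzReflection_of_im_neg hneg]
    exact hU (hg ⟨hD hz, by simpa using hneg.le⟩)

theorem exists_differentiableOn_reflection_across_arc {f φ : ℂ → ℂ} {U : Set ℂ} (hD : IsOpen D)
    (hDconj : MapsTo conj D D) (hU : IsOpen U) (hUconj : MapsTo conj U U)
    (hφ : DifferentiableOn ℂ φ U) (hφinj : InjOn φ U) (hfc : ContinuousOn f (D ∩ {z | 0 ≤ z.im}))
    (hfd : DifferentiableOn ℂ f (D ∩ {z | 0 < z.im}))
    (hfφ : MapsTo f (D ∩ {z | 0 ≤ z.im}) (φ '' U))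
    (hfΓ : MapsTo f (D ∩ {z | z.im = 0}) (φ '' (U ∩ {w | w.im = 0}))) :
    ∃ F : ℂ → ℂ, DifferentiableOn ℂ F D ∧ (∀ z ∈ D, 0 ≤ z.im → F z = f z) ∧
      ∀ z ∈ D, z.im < 0 → ∃ w ∈ U, φ w = f (conj z) ∧ F z = φ (conj w) := by
  set ψ := Function.invFunOn φ U
  have hψ : LeftInvOn ψ φ U := hφinj.leftInvOn_invFunOn
  have hψd : DifferentiableOn ℂ ψ (φ '' U) := differentiableOn_image_of_leftInvOn hU hφ hψ
  have hψU : MapsTo ψ (φ '' U) U := hψ.mapsTo (surjOn_image φ U)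
  have hφψ : RightInvOn ψ φ (φ '' U) := hψ.rightInvOn_image
  have hreal : ∀ z ∈ D, z.im = 0 → (ψ (f z)).im = 0 := by
    intro z hz him
    obtain ⟨w, ⟨hw, hwim⟩, hwf⟩ := hfΓ ⟨hz, him⟩
    rwa [← hwf, hψ hw]
  have hpos : D ∩ {z | 0 < z.im} ⊆ D ∩ {z | 0 ≤ z.im} :=
    inter_subset_inter_right D fun z (hz : 0 < z.im) => hz.le
  have hG : DifferentiableOn ℂ (schwarzReflection (ψ ∘ f)) D :=
    differentiableOn_schwarzReflection hD hDconj (hψd.continuousOn.comp hfc hfφ)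
      (hψd.comp hfd (hfφ.mono_left hpos)) hreal
  refine ⟨φ ∘ schwarzReflection (ψ ∘ f),
    hφ.comp hG (mapsTo_schwarzReflection hDconj hUconj (hψU.comp hfφ)),
    fun z hz him => ?_, fun z hz him => ?_⟩
  · rw [Function.comp_apply, schwarzReflection_of_im_nonneg him]
    exact hφψ (hfφ ⟨hz, him⟩)
  · have hfz : f (conj z) ∈ φ '' U := hfφ ⟨hDconj hz, by simpa using him.le⟩
    refine ⟨ψ (f (conj z)), hψU hfz, hφψ hfz, ?_⟩
    rw [Function.comp_apply, schwarzReflection_of_im_neg him, Function.comp_apply]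

end Reflection

section SlitDisc

open Complex
open scoped ComplexConjugate

lemma slitPlane_eq_compl_nonpos_real : slitPlane = {z : ℂ | z.im = 0 ∧ z.re ≤ 0}ᶜ := by
  ext z
  simp [mem_slitPlane_iff, imp_iff_not_or, or_comm]

lemma mapsTo_conj_ball_inter_slitPlane (r : ℝ) :
    MapsTo conj (ball 0 r ∩ slitPlane) (ball 0 r ∩ slitPlane) :=
  fun z hz => by simpa [mem_slitPlane_iff] using hz

lemma image_ofReal_Ico_subset_ball_inter_real (r : ℝ) :
    ofReal '' Ico 0 r ⊆ ball 0 r ∩ {z | z.im = 0} := by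
  rintro _ ⟨t, ht, rfl⟩
  exact ⟨by simpa [abs_of_nonneg ht.1] using ht.2, ofReal_im t⟩

lemma ball_inter_slitPlane_inter_real_subset (r : ℝ) :
    ball 0 r ∩ slitPlane ∩ {z | z.im = 0} ⊆ ofReal '' Ico 0 r := by
  rintro z ⟨⟨hball, hslit⟩, him⟩
  obtain ⟨x, rfl⟩ : ∃ x : ℝ, (x : ℂ) = z := ⟨z.re, Complex.ext rfl him.symm⟩
  have hx : 0 < x := ofReal_mem_slitPlane.1 hslit
  exact mem_image_of_mem _ ⟨hx.le, by simpa [abs_of_pos hx] using hball⟩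

lemma ball_inter_slitPlane_inter_im_nonneg_subset (r : ℝ) :
    ball 0 r ∩ slitPlane ∩ {z | 0 ≤ z.im} ⊆
      ({z : ℂ | 0 < z.im} ∩ ball 0 r) ∪ ofReal '' Ico 0 r := by
  rintro z ⟨hz, him⟩
  rcases (show 0 ≤ z.im from him).lt_or_eq with hpos | hzero
  · exact Or.inl ⟨hpos, hz.1⟩
  · exact Or.inr (ball_inter_slitPlane_inter_real_subset r ⟨hz, hzero.symm⟩)

theorem schwarz_reflection_analytic_arc_general {r : ℝ} (hr : 0 < r) {f φ : ℂ → ℂ} {U : Set ℂ}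
    (hf : DifferentiableOn ℂ f ({z : ℂ | 0 < z.im} ∩ ball 0 r))
    (hfc : ContinuousOn f (({z : ℂ | 0 < z.im} ∩ ball 0 r) ∪ ofReal '' Ico 0 r))
    (hU : IsOpen U) (hUconj : MapsTo conj U U) (hφ : DifferentiableOn ℂ φ U) (hφinj : InjOn φ U)
    (hΓ : MapsTo f (ofReal '' Ico 0 r) (φ '' (U ∩ {w | w.im = 0}))) :
    ∃ r' : ℝ, 0 < r' ∧ r' ≤ r ∧ ∃ F : ℂ → ℂ, DifferentiableOn ℂ F (ball 0 r' ∩ slitPlane) ∧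
      (∀ z ∈ ball 0 r' ∩ slitPlane, 0 ≤ z.im → F z = f z) ∧
      ∀ z ∈ ball 0 r' ∩ slitPlane, z.im < 0 →
        ∃ w ∈ U, φ w = f (conj z) ∧ F z = φ (conj w) := by
  have hzero : (0 : ℂ) ∈ ofReal '' Ico 0 r := ⟨0, ⟨le_rfl, hr⟩, ofReal_zero⟩
  have hf0 : f 0 ∈ φ '' U := image_mono inter_subset_left (hΓ hzero)
  obtain ⟨δ, hδ, hδU⟩ := mem_nhdsWithin_iff.1 <| hfc 0 (Or.inr hzero) <|
    (isOpen_image_of_differentiableOn_of_injOn hU hφ hφinj).mem_nhds hf0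
  have hball : ball (0 : ℂ) (min δ r) ⊆ ball 0 r := ball_subset_ball (min_le_right δ r)
  have hdomain : ball 0 (min δ r) ∩ slitPlane ∩ {z | 0 ≤ z.im} ⊆
      ({z : ℂ | 0 < z.im} ∩ ball 0 r) ∪ ofReal '' Ico 0 r :=
    Subset.trans (by gcongr) (ball_inter_slitPlane_inter_im_nonneg_subset r)
  refine ⟨min δ r, lt_min hδ hr, min_le_right δ r, exists_differentiableOn_reflection_across_arc
    (isOpen_ball.inter isOpen_slitPlane) (mapsTo_conj_ball_inter_slitPlane _) hU hUconj hφ hφinj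
    (hfc.mono hdomain) (hf.mono fun z hz => ⟨hz.2, hball hz.1.1⟩) (fun z hz => ?_) ?_⟩
  · exact hδU ⟨ball_subset_ball (min_le_left δ r) hz.1.1, hdomain hz⟩
  · exact hΓ.mono_left <|
      Subset.trans (by gcongr) (ball_inter_slitPlane_inter_real_subset r)

end SlitDisc

/-- Example 2.13 (Schwarz reflection at an analytic arc): let `V = ℍ ∩ B(0, r)`, let `f` be
holomorphic on `V` with a continuous extension to `V ∪ [0, r)` mapping `[0, r)` into the
analytic arc `Γ = φ([0,1))`, where `φ : B(0,1) → ℂ` is injective and holomorphic. Then for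
some `0 < r' ≤ r` the map `f` extends holomorphically to `B(0, r') \ ℝ_{≤0}` by
`F z = f z` for `Im z ≥ 0` and `F z = φ (conj (φ⁻¹ (f (conj z))))` for `Im z < 0`;
in particular `f (conj z) ∈ φ(B(0,1))` there, so the formula is well defined. -/
theorem schwarz_reflection_analytic_arc (r : ℝ) (hr : 0 < r) (f φ : ℂ → ℂ)
    (hf : DifferentiableOn ℂ f ({z : ℂ | 0 < z.im} ∩ ball (0 : ℂ) r))
    (hfc : ContinuousOn f (({z : ℂ | 0 < z.im} ∩ ball (0 : ℂ) r) ∪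
      (Complex.ofReal '' Ico (0 : ℝ) r)))
    (hφ : DifferentiableOn ℂ φ (ball (0 : ℂ) 1))
    (hφinj : InjOn φ (ball (0 : ℂ) 1))
    (hΓ : f '' (Complex.ofReal '' Ico (0 : ℝ) r) ⊆ φ '' (Complex.ofReal '' Ico (0 : ℝ) 1)) :
    ∃ r' : ℝ, 0 < r' ∧ r' ≤ r ∧ ∃ F : ℂ → ℂ,
      DifferentiableOn ℂ F (ball (0 : ℂ) r' \ {z : ℂ | z.im = 0 ∧ z.re ≤ 0}) ∧
      (∀ z ∈ ball (0 : ℂ) r' \ {z : ℂ | z.im = 0 ∧ z.re ≤ 0}, 0 ≤ z.im → F z = f z) ∧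
      (∀ z ∈ ball (0 : ℂ) r' \ {z : ℂ | z.im = 0 ∧ z.re ≤ 0}, z.im < 0 →
        ∃ w ∈ ball (0 : ℂ) 1, φ w = f ((starRingEnd ℂ) z) ∧ F z = φ ((starRingEnd ℂ) w)) := by
  simpa only [slitPlane_eq_compl_nonpos_real, ← sdiff_eq] using
    schwarz_reflection_analytic_arc_general hr hf hfc isOpen_ball (fun z hz => by simpa using hz)
      hφ hφinj <| (mapsTo_iff_image_subset.2 hΓ).mono_right <|
        image_mono (image_ofReal_Ico_subset_ball_inter_real 1)
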